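/- arXiv:2010.15810 — 2 statements merged into one kernel-verified Lean document; each statement's English description precedes it below -/
import Mathlib

section
/- (Proposition 7, limits of the symmetric-oligopoly bias) For every fixed real β > 1, α*(β, n) tends to 1 as n → ∞; and for every fixed natural number n ≥ 2, α*(β, n) tends to 1 as β → ∞. -/
/-!
Write `r = nβ − 1` and `D = 2r − (n − 2) = n(2β − 1)`. Completing the square turns the radicand into
`D² − 4(n − 1)`, so that `α* = (n − 2 + √(D² − 4(n − 1))) / (n − 2 + D)`. For `β > 1` and `n ≥ 2`
one has `D ≥ n`, whence `D − 4 ≤ √(D² − 4(n − 1)) ≤ D` and `1 − 2/r ≤ α* ≤ 1`. Both limits follow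
by squeezing, since `r → ∞` in either regime.
-/

/-- The level of analytics bias in the unique symmetric naive analytics equilibrium of a
symmetric linear price competition among `n` firms, where `β = |b/c| > 1` and `r = nβ − 1`. -/
noncomputable def alphaStar (β : ℝ) (n : ℕ) : ℝ :=
  ((n : ℝ) - 2 + Real.sqrt (((n : ℝ) - 2) ^ 2 - 4 * ((n : ℝ) - 1)
      - 4 * ((n : ℝ) * β - 1) * ((n : ℝ) - 2 - ((n : ℝ) * β - 1)))) / (2 * ((n : ℝ) * β - 1))

/-- The radicand, with the square completed. -/
lemma alphaStar_eq (β : ℝ) (n : ℕ) :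
    alphaStar β n = ((n : ℝ) - 2 + Real.sqrt (((n : ℝ) * (2 * β - 1)) ^ 2 - 4 * ((n : ℝ) - 1)))
      / (2 * ((n : ℝ) * β - 1)) := by
  unfold alphaStar
  congr 3
  ring

lemma alphaStar_bounds {β : ℝ} {n : ℕ} (hβ : 1 < β) (hn : 2 ≤ n) :
    1 - 2 / ((n : ℝ) * β - 1) ≤ alphaStar β n ∧ alphaStar β n ≤ 1 := by
  have hn' : (2 : ℝ) ≤ n := by exact_mod_cast hn
  have hr : 0 < (n : ℝ) * β - 1 := by nlinarith
  rw [alphaStar_eq]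
  obtain ⟨D, hD⟩ : ∃ D, D = (n : ℝ) * (2 * β - 1) := ⟨_, rfl⟩
  have hDn : (n : ℝ) ≤ D := by nlinarith
  have h2r : 2 * ((n : ℝ) * β - 1) = n - 2 + D := by rw [hD]; ring
  rw [← hD]
  have hupper : Real.sqrt (D ^ 2 - 4 * ((n : ℝ) - 1)) ≤ D :=
    Real.sqrt_le_iff.2 ⟨by linarith, by linarith⟩
  have hlower : D - 4 ≤ Real.sqrt (D ^ 2 - 4 * ((n : ℝ) - 1)) := by
    rcases le_or_gt D 4 with h | h
    · exact (sub_nonpos.2 h).trans (Real.sqrt_nonneg _)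
    · exact Real.le_sqrt_of_sq_le (by nlinarith)
  constructor
  · rw [le_div_iff₀ (by positivity)]
    have : (1 - 2 / ((n : ℝ) * β - 1)) * (2 * ((n : ℝ) * β - 1))
        = 2 * ((n : ℝ) * β - 1) - 4 := by
      field_simp
      ring
    linarith
  · rw [div_le_one (by positivity)]
    linarith

lemma tendsto_one_sub_two_div {ι : Type*} {l : Filter ι} {r : ι → ℝ}
    (hr : Filter.Tendsto r l Filter.atTop) :
    Filter.Tendsto (fun i => 1 - 2 / (r i - 1)) l (nhds 1) := by
  have h : Filter.Tendsto (fun i => r i - 1) l Filter.atTop := by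
    simpa only [sub_eq_add_neg] using Filter.tendsto_atTop_add_const_right l (-1) hr
  simpa using (h.const_div_atTop 2).const_sub 1

/-- **Proposition 7** (limits of the symmetric-oligopoly bias). For fixed `β > 1`,
`α*(β, n) → 1` as `n → ∞`; and for fixed `n ≥ 2`, `α*(β, n) → 1` as `β → ∞`. -/
theorem alphaStar_limits :
    (∀ β : ℝ, 1 < β →
        Filter.Tendsto (fun n : ℕ => alphaStar β n) Filter.atTop (nhds 1)) ∧
      (∀ n : ℕ, 2 ≤ n →
        Filter.Tendsto (fun β : ℝ => alphaStar β n) Filter.atTop (nhds 1)) := by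
  refine ⟨fun β hβ => ?_, fun n hn => ?_⟩
  · have hr : Filter.Tendsto (fun n : ℕ => (n : ℝ) * β) Filter.atTop Filter.atTop :=
      tendsto_natCast_atTop_atTop.atTop_mul_const (by linarith)
    refine tendsto_of_tendsto_of_tendsto_of_le_of_le' (tendsto_one_sub_two_div hr)
      tendsto_const_nhds ?_ ?_
    all_goals filter_upwards [Filter.eventually_ge_atTop 2] with n hn
    exacts [(alphaStar_bounds hβ hn).1, (alphaStar_bounds hβ hn).2]
  · have hn' : (0 : ℝ) < n := by exact_mod_cast (by omega : 0 < n)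
    have hr : Filter.Tendsto (fun β : ℝ => (n : ℝ) * β) Filter.atTop Filter.atTop :=
      Filter.tendsto_id.const_mul_atTop hn'
    refine tendsto_of_tendsto_of_tendsto_of_le_of_le' (tendsto_one_sub_two_div hr)
      tendsto_const_nhds ?_ ?_
    all_goals filter_upwards [Filter.eventually_gt_atTop 1] with β hβ
    exacts [(alphaStar_bounds hβ hn).1, (alphaStar_bounds hβ hn).2]
end

section
/- (Overestimation of advertising effectiveness from reactive budgeting) For all real numbers x_L, x_H with 0 ≤ x_L < x_H: φ(−x_L)/Φ(−x_L) > φ(x_H)/Φ(x_H), and consequently the naive estimate of the advertising effect, (1/2)·[(1 + (φ(−x_L)/Φ(−x_L))/(x_H − x_L)) + (1 − (φ(x_H)/Φ(x_H))/(x_H − x_L))], is strictly greater than 1, the true effect. -/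
/-!
Passing from `-xL` to `xH` lowers the numerator of `φ/Φ` and does not lower its denominator:
`|-xL| < |xH|` gives `φ(xH) < φ(-xL)`, because the density is strictly decreasing in `|x|`
(`stdNormalPDF_lt_of_sq_lt_sq`), and `-xL ≤ xH` gives `0 < Φ(-xL) ≤ Φ(xH)` (`stdNormalCDF_pos`,
`stdNormalCDF_mono`). The naive estimate equals
`1 + (φ(-xL)/Φ(-xL) - φ(xH)/Φ(xH)) / (2 (xH - xL))`, so it exceeds `1`.
-/

open MeasureTheory

/-- The standard normal density `φ(x) = (2π)^{−1/2} exp(−x²/2)`. -/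
noncomputable def stdNormalPDF (x : ℝ) : ℝ :=
  (Real.sqrt (2 * Real.pi))⁻¹ * Real.exp (-x ^ 2 / 2)

/-- The standard normal cumulative distribution function `Φ(x) = ∫_{−∞}^{x} φ(t) dt`. -/
noncomputable def stdNormalCDF (x : ℝ) : ℝ :=
  ∫ t in Set.Iic x, stdNormalPDF t

theorem stdNormalPDF_pos (x : ℝ) : 0 < stdNormalPDF x := by
  unfold stdNormalPDF
  positivity

theorem stdNormalPDF_lt_of_sq_lt_sq {x y : ℝ} (h : x ^ 2 < y ^ 2) :
    stdNormalPDF y < stdNormalPDF x := by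
  unfold stdNormalPDF
  gcongr

theorem integrable_stdNormalPDF : Integrable stdNormalPDF := by
  have h := ProbabilityTheory.integrable_gaussianPDFReal 0 1
  convert h using 1
  ext x
  simp [stdNormalPDF, ProbabilityTheory.gaussianPDFReal]

theorem stdNormalCDF_pos (x : ℝ) : 0 < stdNormalCDF x := by
  unfold stdNormalCDF
  rw [setIntegral_pos_iff_support_of_nonneg_ae
    (Filter.Eventually.of_forall fun t => (stdNormalPDF_pos t).le)
    integrable_stdNormalPDF.integrableOn]
  have hs : Function.support stdNormalPDF = Set.univ :=
    Set.eq_univ_of_forall fun t => (stdNormalPDF_pos t).ne'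
  simp [hs]

theorem stdNormalCDF_mono : Monotone stdNormalCDF := fun _ _ h =>
  setIntegral_mono_set integrable_stdNormalPDF.integrableOn
    (Filter.Eventually.of_forall fun t => (stdNormalPDF_pos t).le)
    (Set.Iic_subset_Iic.2 h).eventuallyLE

/-- **Overestimation of advertising effectiveness from reactive budgeting.** For
`0 ≤ x_L < x_H`: `φ(−x_L)/Φ(−x_L) > φ(x_H)/Φ(x_H)`, and the naive estimate of the
advertising effect exceeds the true effect `1`. -/
theorem naive_ad_estimate_gt_one (xL xH : ℝ) (hL : 0 ≤ xL) (hLH : xL < xH) :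
    stdNormalPDF xH / stdNormalCDF xH < stdNormalPDF (-xL) / stdNormalCDF (-xL) ∧
      1 < (1 / 2) * ((1 + (stdNormalPDF (-xL) / stdNormalCDF (-xL)) / (xH - xL))
        + (1 - (stdNormalPDF xH / stdNormalCDF xH) / (xH - xL))) := by
  have hratio :
      stdNormalPDF xH / stdNormalCDF xH < stdNormalPDF (-xL) / stdNormalCDF (-xL) :=
    div_lt_div₀ (stdNormalPDF_lt_of_sq_lt_sq (by nlinarith)) (stdNormalCDF_mono (by linarith))
      (stdNormalPDF_pos _).le (stdNormalCDF_pos _)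
  refine ⟨hratio, ?_⟩
  have hdiv := div_lt_div_of_pos_right hratio (sub_pos.2 hLH)
  linarith
end
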